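/- Let m, n be positive integers with n − m ≥ 2, and let μ be the standard Gaussian measure on real m×n matrices. Then ∫ ‖Ωᵀ(ΩΩᵀ)⁻¹‖_F² dμ(Ω) = m/(n − m − 1). (For μ-almost every Ω the matrix ΩΩᵀ is invertible and Ωᵀ(ΩΩᵀ)⁻¹ equals the Moore–Penrose pseudoinverse Ω†, so this states that the expected squared Frobenius norm of the pseudoinverse of an m×n standard Gaussian matrix equals m/(n−m−1).) -/

import Mathlib

/-!
Since `(Ωᵀ G⁻¹)ᵀ (Ωᵀ G⁻¹) = G⁻¹` for `G = Ω Ωᵀ` invertible, the squared Frobenius norm of the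
pseudoinverse is the trace of `G⁻¹`, and `G` is the Gram matrix of the rows of `Ω`. The `i`-th
diagonal entry of the inverse Gram matrix of independent vectors is `1 / ‖P x‖²`, where `x` is the
`i`-th vector and `P` the orthogonal projection onto the complement of the span of the others
(`inv_gram_insertNth_apply_self`).

Conditionally on the other rows, that complement `V` is a fixed space of dimension
`k = n - m + 1 ≥ 3`, and `P x` is standard Gaussian on `V`
(`map_orthogonalProjectionOnto_stdGaussian`). Hence `‖P x‖²` is `χ²_k` distributed and
`E (1 / ‖P x‖²) = 1 / (k - 2) = 1 / (n - m - 1)` (`lintegral_inv_sum_sq_gaussian`). Summing over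
the `m` rows gives the result.

Almost sure independence of the rows (`ae_linearIndependent`) goes by induction on their number:
finiteness of `E (1 / ‖P x‖²)` forces `P x ≠ 0` almost surely, so a new Gaussian vector avoids the
span of the previous ones. All expectations are computed as lower Lebesgue integrals in `ℝ≥0∞`,
where `0⁻¹ = ∞`, so that no integrability has to be checked in advance.
-/

open MeasureTheory ProbabilityTheory Matrix

/-- The measurable structure on real `m × n` matrices (product σ-algebra). -/
instance matrixMeasurableSpace {m n : ℕ} : MeasurableSpace (Matrix (Fin m) (Fin n) ℝ) :=
  inferInstanceAs (MeasurableSpace (Fin m → Fin n → ℝ))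

/-- The standard Gaussian measure on real `m × n` matrices: every entry is an independent
standard normal random variable. -/
noncomputable def stdGaussianMatrix (m n : ℕ) : Measure (Matrix (Fin m) (Fin n) ℝ) :=
  (Measure.pi fun _ : Fin m => Measure.pi fun _ : Fin n => gaussianReal 0 1 :
    Measure (Fin m → Fin n → ℝ))

/-- The Frobenius norm of a real matrix. -/
noncomputable def frobNorm {α β : Type*} [Fintype α] [Fintype β] (M : Matrix α β ℝ) : ℝ :=
  Real.sqrt (∑ i, ∑ j, ‖M i j‖ ^ 2)

/-! ### The mean of an inverse chi-squared variable -/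

theorem integral_exp_neg_mul_sq_gaussianReal {t : ℝ} (ht : 0 < t) :
    ∫ x, Real.exp (-t * x ^ 2) ∂(gaussianReal 0 1) = (1 + 2 * t) ^ (-(1 / 2) : ℝ) := by
  rw [integral_gaussianReal_eq_integral_smul one_ne_zero]
  have h : ∀ x : ℝ, gaussianPDFReal 0 1 x • Real.exp (-t * x ^ 2)
      = (√(2 * Real.pi))⁻¹ * Real.exp (-(t + 1 / 2) * x ^ 2) := fun x => by
    simp only [gaussianPDFReal, smul_eq_mul, NNReal.coe_one, mul_one, sub_zero]
    rw [mul_assoc, ← Real.exp_add]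
    ring_nf
  simp_rw [h]
  have hpi := Real.pi_pos
  rw [integral_const_mul, integral_gaussian, Real.rpow_neg (by positivity),
    ← Real.sqrt_eq_rpow, ← Real.sqrt_inv, ← Real.sqrt_inv, ← Real.sqrt_mul (by positivity)]
  congr 1
  field_simp
  ring

/-- The Laplace transform of the `χ²_k` distribution. -/
theorem lintegral_pi_exp_neg_mul_sum_sq {t : ℝ} (ht : 0 < t) (k : ℕ) :
    ∫⁻ x : Fin k → ℝ, ENNReal.ofReal (Real.exp (-t * ∑ i, x i ^ 2))
        ∂(Measure.pi fun _ => gaussianReal 0 1)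
      = ENNReal.ofReal ((1 + 2 * t) ^ (-(k / 2) : ℝ)) := by
  have h : ∀ x : Fin k → ℝ, Real.exp (-t * ∑ i, x i ^ 2) = ∏ i, Real.exp (-t * x i ^ 2) :=
    fun x => by rw [Finset.mul_sum, Real.exp_sum]
  simp_rw [h]
  rw [← ofReal_integral_eq_lintegral_ofReal]
  · rw [integral_fintype_prod_eq_prod (f := fun _ x => Real.exp (-t * x ^ 2))]
    simp_rw [integral_exp_neg_mul_sq_gaussianReal ht]
    rw [Finset.prod_const, Finset.card_univ, Fintype.card_fin, ← Real.rpow_natCast,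
      ← Real.rpow_mul (by positivity)]
    congr 2
    ring
  · refine Integrable.fintype_prod (f := fun _ x => Real.exp (-t * x ^ 2)) fun _ => ?_
    refine Integrable.of_bound (by fun_prop) 1 (ae_of_all _ fun x => ?_)
    rw [Real.norm_of_nonneg (Real.exp_nonneg _), Real.exp_le_one_iff]
    nlinarith [sq_nonneg x]
  · exact ae_of_all _ fun x => Finset.prod_nonneg fun _ _ => Real.exp_nonneg _

/-- The representation of `1 / s` as a Laplace integral. At `s = 0` both sides are `∞`. -/
theorem lintegral_Ioi_exp_neg_mul {s : ℝ} (hs : 0 ≤ s) :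
    ∫⁻ t in Set.Ioi (0 : ℝ), ENNReal.ofReal (Real.exp (-t * s)) = (ENNReal.ofReal s)⁻¹ := by
  rcases hs.eq_or_lt with rfl | hs
  · simp
  · have h : ∀ t : ℝ, -t * s = -s * t := fun t => by ring
    simp_rw [h]
    rw [← ofReal_integral_eq_lintegral_ofReal (integrableOn_exp_mul_Ioi (by linarith) 0)
      (ae_of_all _ fun _ => Real.exp_nonneg _), integral_exp_mul_Ioi (by linarith),
      ← ENNReal.ofReal_inv_of_pos hs]
    simp [neg_div_neg_eq]

theorem lintegral_Ioi_one_add_two_mul_rpow {k : ℕ} (hk : 3 ≤ k) :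
    ∫⁻ t in Set.Ioi (0 : ℝ), ENNReal.ofReal ((1 + 2 * t) ^ (-(k / 2) : ℝ))
      = ENNReal.ofReal ((k : ℝ) - 2)⁻¹ := by
  have hk' : (3 : ℝ) ≤ k := by exact_mod_cast hk
  have hne : (k : ℝ) - 2 ≠ 0 := by linarith
  have hd : ∀ t ∈ Set.Ici (0 : ℝ), HasDerivAt
      (fun t : ℝ => -((k : ℝ) - 2)⁻¹ * (1 + 2 * t) ^ (1 - k / 2 : ℝ))
      ((1 + 2 * t) ^ (-(k / 2) : ℝ)) t := fun t ht => by
    have ht : (0 : ℝ) ≤ t := ht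
    have h1 : HasDerivAt (fun t : ℝ => 1 + 2 * t) 2 t := by
      simpa using ((hasDerivAt_id t).const_mul 2).const_add 1
    refine ((h1.rpow_const (p := (1 - k / 2 : ℝ)) (Or.inl (by positivity))).const_mul
      (-((k : ℝ) - 2)⁻¹)).congr_deriv ?_
    rw [show (1 - k / 2 - 1 : ℝ) = -(k / 2) by ring]
    field_simp
    ring
  have hnn : ∀ t ∈ Set.Ioi (0 : ℝ), 0 ≤ (1 + 2 * t) ^ (-(k / 2) : ℝ) := fun t ht => by
    have ht : (0 : ℝ) < t := ht
    positivity
  have hl : Filter.Tendsto (fun t : ℝ => -((k : ℝ) - 2)⁻¹ * (1 + 2 * t) ^ (1 - k / 2 : ℝ))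
      Filter.atTop (nhds 0) := by
    have h1 : Filter.Tendsto (fun t : ℝ => 1 + 2 * t) Filter.atTop Filter.atTop :=
      Filter.tendsto_atTop_add_const_left _ _
        (Filter.tendsto_id.const_mul_atTop (by norm_num : (0 : ℝ) < 2))
    have h2 := ((tendsto_rpow_neg_atTop (y := (k / 2 - 1 : ℝ)) (by linarith)).comp
      h1).const_mul (-((k : ℝ) - 2)⁻¹)
    simpa [Function.comp_def] using h2
  rw [← ofReal_integral_eq_lintegral_ofReal (integrableOn_Ioi_deriv_of_nonneg' hd hnn hl)
    ((ae_restrict_iff' measurableSet_Ioi).2 (ae_of_all _ hnn)),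
    integral_Ioi_of_hasDerivAt_of_nonneg' hd hnn hl]
  simp

/-- The mean of `1 / χ²_k` is `1 / (k - 2)`. Writing `1 / s = ∫₀^∞ exp (-t s) dt` reduces this to
the Laplace transform of `χ²_k`, which is `(1 + 2 t) ^ (-k / 2)`. -/
theorem lintegral_inv_sum_sq_gaussian {k : ℕ} (hk : 3 ≤ k) :
    ∫⁻ x : Fin k → ℝ, (ENNReal.ofReal (∑ i, x i ^ 2))⁻¹
        ∂(Measure.pi fun _ => gaussianReal 0 1)
      = ENNReal.ofReal ((k : ℝ) - 2)⁻¹ := by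
  have h : ∀ x : Fin k → ℝ, 0 ≤ ∑ i, x i ^ 2 := fun x => Finset.sum_nonneg fun _ _ => sq_nonneg _
  simp_rw [← fun x => lintegral_Ioi_exp_neg_mul (h x)]
  rw [lintegral_lintegral_swap (by fun_prop), ← lintegral_Ioi_one_add_two_mul_rpow hk]
  exact setLIntegral_congr_fun measurableSet_Ioi fun t ht => lintegral_pi_exp_neg_mul_sum_sq ht k

/-! ### Projections of Gaussian vectors and Gram matrices -/

section Projection

variable {E : Type*} [NormedAddCommGroup E] [InnerProductSpace ℝ E] [FiniteDimensional ℝ E]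
  [MeasurableSpace E] [BorelSpace E]

/-- An orthogonal projection of a standard Gaussian vector is standard Gaussian on the
range: the characteristic functions agree because the projection is adjoint to the inclusion. -/
theorem map_orthogonalProjectionOnto_stdGaussian (V : Submodule ℝ E) :
    (stdGaussian E).map V.orthogonalProjectionOnto = stdGaussian V := by
  have : IsProbabilityMeasure ((stdGaussian E).map V.orthogonalProjectionOnto) :=
    Measure.isProbabilityMeasure_map (by fun_prop)
  refine Measure.ext_of_charFun (funext fun t => ?_)
  rw [charFun_stdGaussian, charFun_apply, integral_map (by fun_prop) (by fun_prop)]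
  have h : ∀ x : E, inner ℝ (V.orthogonalProjectionOnto x) t = inner ℝ x (t : E) := fun x => by
    simp
  simp_rw [h]
  rw [← charFun_apply, charFun_stdGaussian, Submodule.coe_norm]

theorem lintegral_inv_norm_sq_stdGaussian (hE : 3 ≤ Module.finrank ℝ E) :
    ∫⁻ x : E, (ENNReal.ofReal (‖x‖ ^ 2))⁻¹ ∂(stdGaussian E)
      = ENNReal.ofReal ((Module.finrank ℝ E : ℝ) - 2)⁻¹ := by
  rw [stdGaussian_eq_map_pi_orthonormalBasis (stdOrthonormalBasis ℝ E),
    lintegral_map (by fun_prop) (by fun_prop), ← lintegral_inv_sum_sq_gaussian hE]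
  refine lintegral_congr fun x => ?_
  rw [← (stdOrthonormalBasis ℝ E).sum_sq_norm_inner_right]
  simp [(stdOrthonormalBasis ℝ E).orthonormal.inner_right_fintype]

theorem lintegral_inv_norm_sq_proj_stdGaussian (V : Submodule ℝ E)
    (hV : 3 ≤ Module.finrank ℝ V) :
    ∫⁻ x : E, (ENNReal.ofReal (‖V.orthogonalProjectionOnto x‖ ^ 2))⁻¹ ∂(stdGaussian E)
      = ENNReal.ofReal ((Module.finrank ℝ V : ℝ) - 2)⁻¹ := by
  rw [← lintegral_inv_norm_sq_stdGaussian hV, ← map_orthogonalProjectionOnto_stdGaussian,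
    lintegral_map (by fun_prop) (by fun_prop)]

theorem measurable_inv_gram_apply {m : ℕ} (i j : Fin m) :
    Measurable fun v : Fin m → E => (gram ℝ v)⁻¹ i j := by
  have hc : Continuous fun v : Fin m → E => gram ℝ v :=
    continuous_pi fun a => continuous_pi fun b =>
      (continuous_apply a).inner (continuous_apply b)
  simp only [Matrix.inv_def, Ring.inverse_eq_inv', Matrix.smul_apply, smul_eq_mul]
  exact hc.matrix_det.measurable.inv.mul (hc.matrix_adjugate.matrix_elem i j).measurable

omit [FiniteDimensional ℝ E] in
/-- Linear independence is the open condition that the Gram determinant does not vanish. -/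
theorem measurableSet_linearIndependent [SecondCountableTopology E] (m : ℕ) :
    MeasurableSet {v : Fin m → E | LinearIndependent ℝ v} := by
  have hc : Continuous fun v : Fin m → E => gram ℝ v :=
    continuous_pi fun a => continuous_pi fun b =>
      (continuous_apply a).inner (continuous_apply b)
  simp_rw [← det_gram_ne_zero_iff_linearIndependent]
  exact (isOpen_ne_fun hc.matrix_det continuous_const).measurableSet

/-- Splitting off the `i`-th vector `x` of a Gaussian family: the remaining family `w` comes
first in the product, since later integrals are computed over `x` for fixed `w`. -/
theorem measurePreserving_insertNth {m : ℕ} (i : Fin (m + 1)) :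
    MeasurePreserving (fun p : (Fin m → E) × E => (i.insertNth p.2 p.1 : Fin (m + 1) → E))
      ((Measure.pi fun _ => stdGaussian E).prod (stdGaussian E))
      (Measure.pi fun _ => stdGaussian E) :=
  ((measurePreserving_piFinSuccAbove (fun _ => stdGaussian E) i).symm).comp
    Measure.measurePreserving_swap

omit [MeasurableSpace E] [BorelSpace E] in
theorem finrank_orthogonal_span {m : ℕ} {w : Fin m → E} (hw : LinearIndependent ℝ w) :
    m + Module.finrank ℝ (Submodule.span ℝ (Set.range w))ᗮ = Module.finrank ℝ E := by
  rw [← Submodule.finrank_add_finrank_orthogonal (Submodule.span ℝ (Set.range w)),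
    finrank_span_eq_card hw, Fintype.card_fin]

/-- At most `dim E - 2` independent standard Gaussian vectors are almost surely linearly
independent. The (non-optimal) bound on `m` makes the complement of the span of the previous
vectors have dimension at least `3`, so that the inverse square norm of the projection onto it has
finite mean and the projection is therefore almost surely nonzero. -/
theorem ae_linearIndependent {m : ℕ} (hm : m + 2 ≤ Module.finrank ℝ E) :
    ∀ᵐ v : Fin m → E ∂(Measure.pi fun _ => stdGaussian E), LinearIndependent ℝ v := by
  induction m with
  | zero => exact ae_of_all _ fun v => linearIndependent_empty_type
  | succ m ih =>
    rw [← (measurePreserving_insertNth 0).map_eq, ae_map_iff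
      (measurePreserving_insertNth 0).measurable.aemeasurable (measurableSet_linearIndependent _),
      Measure.ae_prod_iff_ae_ae
        (p := fun p : (Fin m → E) × E => LinearIndependent ℝ (Fin.insertNth 0 p.2 p.1))
        ((measurePreserving_insertNth 0).measurable (measurableSet_linearIndependent _))]
    filter_upwards [ih (by omega)] with w hw
    have hV := finrank_orthogonal_span hw
    have hfin := lintegral_inv_norm_sq_proj_stdGaussian
      (Submodule.span ℝ (Set.range w))ᗮ (by omega)
    filter_upwards [ae_lt_top (by fun_prop) (hfin.trans_ne ENNReal.ofReal_ne_top)] with x hx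
    simp only [Fin.insertNth_zero']
    refine linearIndependent_finCons.2 ⟨hw, fun hxw => ?_⟩
    have h0 : (Submodule.span ℝ (Set.range w))ᗮ.orthogonalProjectionOnto x = 0 :=
      Submodule.orthogonalProjectionOnto_orthogonal_apply_eq_zero hxw
    -- here the integrand at `x` is `0⁻¹ = ∞`, although it is finite almost everywhere
    simp [h0] at hx

omit [MeasurableSpace E] [BorelSpace E] in
/-- A diagonal entry of an inverse Gram matrix is the inverse squared distance of the
corresponding vector to the span of the others.

For `H = (gram v)⁻¹`, the dual vector `u = ∑ j, H i j • v j` satisfies `⟪u, v j⟫ = δ i j`. It is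
therefore orthogonal to the other vectors, so projecting it gives `u = H i i • P x`, while
`‖u‖² = H i i`. Comparing norms, `H i i = (H i i)² ‖P x‖²`. -/
theorem inv_gram_insertNth_apply_self {m : ℕ} (i : Fin (m + 1)) {x : E} {w : Fin m → E}
    (hv : LinearIndependent ℝ (i.insertNth x w : Fin (m + 1) → E)) :
    (gram ℝ (i.insertNth x w : Fin (m + 1) → E))⁻¹ i i
      = (‖(Submodule.span ℝ (Set.range w))ᗮ.orthogonalProjectionOnto x‖ ^ 2)⁻¹ := by
  set v : Fin (m + 1) → E := i.insertNth x w with hvdef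
  set V := (Submodule.span ℝ (Set.range w))ᗮ
  set H := (gram ℝ v)⁻¹
  have hdet : IsUnit (gram ℝ v).det := (det_gram_ne_zero_iff_linearIndependent.2 hv).isUnit
  set u : E := ∑ j, H i j • v j with hu
  have huv : ∀ j, inner ℝ u (v j) = (1 : Matrix _ _ ℝ) i j := fun j => by
    rw [← Matrix.nonsing_inv_mul _ hdet, Matrix.mul_apply, hu, sum_inner]
    simp [real_inner_smul_left, H]
  have hvi : v i = x := by simp [hvdef]
  have hvs : ∀ j, v (i.succAbove j) = w j := fun j => by simp [hvdef]
  have huV : u ∈ V := by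
    rw [Submodule.mem_orthogonal']
    intro y hy
    induction hy using Submodule.span_induction with
    | mem y hy =>
      obtain ⟨j, rfl⟩ := hy
      rw [← hvs, huv, Matrix.one_apply_ne (i.succAbove_ne j).symm]
    | zero => simp
    | add y z _ _ hy hz => rw [inner_add_right, hy, hz, add_zero]
    | smul c y _ hy => rw [real_inner_smul_right, hy, mul_zero]
  have hproj : u = H i i • (V.orthogonalProjectionOnto x : E) := by
    have h1 : (V.orthogonalProjectionOnto u : E) = u := by
      exact congrArg Subtype.val (Submodule.orthogonalProjectionOnto_mem_subspace_eq_self ⟨u, huV⟩)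
    have h2 : ∀ j, V.orthogonalProjectionOnto (w j) = 0 := fun j =>
      Submodule.orthogonalProjectionOnto_orthogonal_apply_eq_zero
        (Submodule.subset_span ⟨j, rfl⟩)
    rw [← h1, hu, map_sum, Fin.sum_univ_succAbove _ i]
    simp [hvi, hvs, h2]
  have hnorm : ‖u‖ ^ 2 = H i i := by
    rw [← real_inner_self_eq_norm_sq]
    conv_lhs => rw [hu, inner_sum]
    simp_rw [← hu, real_inner_smul_right, huv, Matrix.one_apply]
    simp
  have hne : H i i ≠ 0 := fun h => by
    have := huv i
    rw [hproj, h, zero_smul, inner_zero_left, Matrix.one_apply_eq] at this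
    exact zero_ne_one this
  rw [hproj, norm_smul, mul_pow, Real.norm_eq_abs, sq_abs, Submodule.norm_coe] at hnorm
  refine eq_inv_of_mul_eq_one_left (mul_left_cancel₀ hne ?_)
  linarith

/-- The mean of a diagonal entry of the inverse Gram matrix of `m` standard Gaussian vectors. -/
theorem lintegral_inv_gram_apply_self {m : ℕ} (i : Fin m) (hm : m + 2 ≤ Module.finrank ℝ E) :
    ∫⁻ v : Fin m → E, ENNReal.ofReal ((gram ℝ v)⁻¹ i i) ∂(Measure.pi fun _ => stdGaussian E)
      = ENNReal.ofReal ((Module.finrank ℝ E : ℝ) - m - 1)⁻¹ := by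
  obtain _ | m := m
  · exact i.elim0
  have hmeas : Measurable fun v : Fin (m + 1) → E => ENNReal.ofReal ((gram ℝ v)⁻¹ i i) :=
    (measurable_inv_gram_apply i i).ennreal_ofReal
  have hmp := measurePreserving_insertNth (E := E) i
  refine (hmp.lintegral_comp hmeas).symm.trans ?_
  refine (lintegral_prod _ (hmeas.comp hmp.measurable).aemeasurable).trans ?_
  have hae := Measure.ae_ae_of_ae_prod (hmp.quasiMeasurePreserving.ae (ae_linearIndependent hm))
  have hconst : ∀ᵐ w : Fin m → E ∂(Measure.pi fun _ => stdGaussian E),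
      ∫⁻ x, ENNReal.ofReal ((gram ℝ (i.insertNth x w : Fin (m + 1) → E))⁻¹ i i) ∂(stdGaussian E)
        = ENNReal.ofReal ((Module.finrank ℝ E : ℝ) - (m + 1 : ℕ) - 1)⁻¹ := by
    filter_upwards [hae, ae_linearIndependent (E := E) (m := m) (by omega)] with w hwx hw
    have hV := finrank_orthogonal_span hw
    have hfin := lintegral_inv_norm_sq_proj_stdGaussian
      (Submodule.span ℝ (Set.range w))ᗮ (by omega)
    have hcast : (Module.finrank ℝ E : ℝ) - (m + 1 : ℕ) - 1
        = (Module.finrank ℝ (Submodule.span ℝ (Set.range w))ᗮ : ℝ) - 2 := by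
      rw [← hV]; push_cast; ring
    rw [hcast, ← hfin]
    refine lintegral_congr_ae ?_
    filter_upwards [hwx] with x hx
    have hpos : 0 < (gram ℝ (i.insertNth x w : Fin (m + 1) → E))⁻¹ i i :=
      (posDef_gram_of_linearIndependent hx).inv.diag_pos
    rw [inv_gram_insertNth_apply_self i hx] at hpos ⊢
    exact ENNReal.ofReal_inv_of_pos (inv_pos.1 hpos)
  refine (lintegral_congr_ae hconst).trans ?_
  simp

end Projection

/-! ### Rows of a Gaussian matrix -/

/-- The rows of a matrix, as vectors of Euclidean space, so that norms and inner products of rows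
are the Euclidean ones. -/
def euclideanRows {m n : ℕ} (Ω : Matrix (Fin m) (Fin n) ℝ) : Fin m → EuclideanSpace ℝ (Fin n) :=
  fun i => WithLp.toLp 2 (Ω i)

theorem measurePreserving_euclideanRows (m n : ℕ) :
    MeasurePreserving (euclideanRows (m := m) (n := n)) (stdGaussianMatrix m n)
      (Measure.pi fun _ => stdGaussian (EuclideanSpace ℝ (Fin n))) :=
  measurePreserving_pi _ _ fun _ => ⟨by fun_prop, map_pi_eq_stdGaussian⟩

theorem gram_euclideanRows {m n : ℕ} (Ω : Matrix (Fin m) (Fin n) ℝ) :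
    gram ℝ (euclideanRows Ω) = Ω * Ωᵀ := by
  ext i j
  simp [euclideanRows, Matrix.mul_apply, PiLp.inner_apply, mul_comm]

theorem frobNorm_pinv_sq {m n : ℕ} {Ω : Matrix (Fin m) (Fin n) ℝ} (h : IsUnit (Ω * Ωᵀ)) :
    frobNorm (Ωᵀ * (Ω * Ωᵀ)⁻¹) ^ 2 = ∑ i, (Ω * Ωᵀ)⁻¹ i i := by
  have hsq : ∀ M : Matrix (Fin n) (Fin m) ℝ, frobNorm M ^ 2 = (Mᵀ * M).trace := fun M => by
    rw [frobNorm, Real.sq_sqrt (by positivity), Finset.sum_comm]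
    simp [Matrix.trace, Matrix.mul_apply, sq]
  have hmul : (Ωᵀ * (Ω * Ωᵀ)⁻¹)ᵀ * (Ωᵀ * (Ω * Ωᵀ)⁻¹) = (Ω * Ωᵀ)⁻¹ := by
    rw [Matrix.transpose_mul, Matrix.transpose_transpose, Matrix.transpose_nonsing_inv,
      Matrix.transpose_mul, Matrix.transpose_transpose, Matrix.mul_assoc, ← Matrix.mul_assoc Ω,
      Matrix.mul_nonsing_inv _ ((Matrix.isUnit_iff_isUnit_det _).1 h), Matrix.mul_one]
  rw [hsq, hmul]
  rfl

/-- For a standard Gaussian `Ω ∈ ℝ^{m×n}` with `n − m ≥ 2`, `Ω Ωᵀ` is almost surely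
invertible, and the expected squared Frobenius norm of the Moore–Penrose pseudoinverse
`Ω† = Ωᵀ (Ω Ωᵀ)⁻¹` equals `m / (n − m − 1)`. -/
theorem integral_frobenius_sq_pinv_gaussian (m n : ℕ) (hm : 0 < m) (hmn : m + 2 ≤ n) :
    (∀ᵐ Ω ∂(stdGaussianMatrix m n), IsUnit (Ω * Ωᵀ)) ∧
    ∫ Ω, frobNorm (Ωᵀ * (Ω * Ωᵀ)⁻¹) ^ 2 ∂(stdGaussianMatrix m n)
      = (m : ℝ) / ((n : ℝ) - (m : ℝ) - 1) := by
  have hmp := measurePreserving_euclideanRows m n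
  have hfin : m + 2 ≤ Module.finrank ℝ (EuclideanSpace ℝ (Fin n)) := by simpa using hmn
  have hli := hmp.quasiMeasurePreserving.ae (ae_linearIndependent hfin)
  have hunit : ∀ᵐ Ω ∂(stdGaussianMatrix m n), IsUnit (Ω * Ωᵀ) := by
    filter_upwards [hli] with Ω hΩ
    rw [← gram_euclideanRows]
    exact (posDef_gram_of_linearIndependent hΩ).isUnit
  refine ⟨hunit, ?_⟩
  have hpos : 0 < (n : ℝ) - m - 1 := by
    have : (m : ℝ) + 2 ≤ n := by exact_mod_cast hmn
    linarith
  have hmeas : ∀ i, Measurable fun Ω : Matrix (Fin m) (Fin n) ℝ =>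
      (gram ℝ (euclideanRows Ω))⁻¹ i i :=
    fun i => (measurable_inv_gram_apply i i).comp hmp.measurable
  have hcongr : (fun Ω : Matrix (Fin m) (Fin n) ℝ => frobNorm (Ωᵀ * (Ω * Ωᵀ)⁻¹) ^ 2)
      =ᵐ[stdGaussianMatrix m n] fun Ω => ∑ i, (gram ℝ (euclideanRows Ω))⁻¹ i i := by
    filter_upwards [hunit] with Ω hΩ
    rw [frobNorm_pinv_sq hΩ, gram_euclideanRows]
  have hnn : ∀ (Ω : Matrix (Fin m) (Fin n) ℝ) i, 0 ≤ (gram ℝ (euclideanRows Ω))⁻¹ i i :=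
    fun Ω i => (posSemidef_gram ℝ _).inv.diag_nonneg
  rw [integral_congr_ae hcongr, integral_eq_lintegral_of_nonneg_ae
    (ae_of_all _ fun Ω => Finset.sum_nonneg fun i _ => hnn Ω i)
    (Finset.measurable_sum _ fun i _ => hmeas i).aestronglyMeasurable]
  simp_rw [ENNReal.ofReal_sum_of_nonneg fun i _ => hnn _ i]
  rw [lintegral_finsetSum _ fun i _ => (hmeas i).ennreal_ofReal]
  have hrow : ∀ i, ∫⁻ Ω, ENNReal.ofReal ((gram ℝ (euclideanRows Ω))⁻¹ i i)
      ∂(stdGaussianMatrix m n) = ENNReal.ofReal ((n : ℝ) - m - 1)⁻¹ := fun i => by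
    rw [hmp.lintegral_comp (measurable_inv_gram_apply i i).ennreal_ofReal,
      lintegral_inv_gram_apply_self i hfin, finrank_euclideanSpace_fin]
  simp_rw [hrow]
  rw [Finset.sum_const, Finset.card_univ, Fintype.card_fin, nsmul_eq_mul, ENNReal.toReal_mul,
    ENNReal.toReal_natCast, ENNReal.toReal_ofReal (inv_nonneg.2 hpos.le), div_eq_mul_inv]
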